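/- For k ∈ {2, 4, 6, 8}, let σ_k be the linear automorphism of ℝ⁹ negating the first k standard coordinates. Then the eigenspaces of ⋀³σ₂, ⋀³σ₄, ⋀³σ₆, ⋀³σ₈ on the 84-dimensional real vector space ⋀³ℝ⁹ for the eigenvalue 1 have dimensions 42, 40, 46 and 28, respectively; in particular each has codimension strictly greater than 12. -/

import Mathlib

/-!
The wedge products of the standard basis vectors form a basis of `⋀³ℝ⁹` indexed by the
`3`-subsets `s` of `{0, …, 8}`, and `⋀³σ_k` is diagonal in it: the basis vector of `s` is
multiplied by `(-1) ^ #{i ∈ s | i < k}` (`extPowMap_negFirst_basis`). The dimension of an eigenspace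
of a diagonal map is the number of diagonal entries equal to the eigenvalue
(`finrank_eigenspace_of_diagonal`), so the eigenvalue `1` has as dimension the number of `3`-subsets
meeting `{0, …, k - 1}` in an even number of points. These subsets are counted by evaluation.
-/

/-- The linear map induced on the `d`-th exterior power `⋀[R]^d M` by a linear
endomorphism `f` of `M`, acting on decomposables by `v₁ ∧ ⋯ ∧ v_d ↦ f v₁ ∧ ⋯ ∧ f v_d`. -/
noncomputable def extPowMap {R M : Type*} [CommRing R] [AddCommGroup M] [Module R M]
    (d : ℕ) (f : M →ₗ[R] M) : ⋀[R]^d M →ₗ[R] ⋀[R]^d M :=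
  (ExteriorAlgebra.map f).toLinearMap.restrict fun x hx => by
    rw [← ExteriorAlgebra.ιMulti_span_fixedDegree] at hx ⊢
    induction hx using Submodule.span_induction with
    | mem y hy =>
        obtain ⟨m, rfl⟩ := hy
        rw [AlgHom.toLinearMap_apply, ExteriorAlgebra.map_apply_ιMulti]
        exact Submodule.subset_span (Set.mem_range_self _)
    | zero => simp
    | add y z _ _ hy hz => rw [map_add]; exact add_mem hy hz
    | smul a y _ hy => rw [map_smul]; exact Submodule.smul_mem _ _ hy

/-- The linear automorphism of `F^n` negating the first `k` standard coordinates and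
fixing the remaining ones. -/
def negFirst (F : Type*) [Field F] (n k : ℕ) : (Fin n → F) →ₗ[F] (Fin n → F) :=
  LinearMap.pi fun i => if (i : ℕ) < k then -(LinearMap.proj i) else LinearMap.proj i

/-- If `f` is diagonal in the basis `b`, the dimension of its `μ`-eigenspace is the number of
diagonal entries equal to `μ`: the eigenspace is spanned by the corresponding basis vectors. -/
lemma finrank_eigenspace_of_diagonal {K V ι : Type*} [Field K] [AddCommGroup V] [Module K V]
    [Finite ι] (b : Module.Basis ι K V) (f : V →ₗ[K] V) (c : ι → K)
    (hf : ∀ i, f (b i) = c i • b i) (μ : K) :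
    Module.finrank K ↥(Module.End.eigenspace f μ) = Nat.card {i // c i = μ} := by
  classical
  have := Fintype.ofFinite ι
  have hrepr : ∀ x i, b.repr (f x) i = c i * b.repr x i := by
    intro x i
    have h : b.coord i ∘ₗ f = c i • b.coord i := by
      refine b.ext fun j => ?_
      by_cases hij : j = i
      · subst hij
        simp [hf]
      · simp [hf, hij]
    simpa using LinearMap.congr_fun h x
  have hspan : Module.End.eigenspace f μ
      = Submodule.span K (Set.range fun i : {i // c i = μ} => b i) := by
    have hrange : (Set.range fun i : {i // c i = μ} => b i) = b '' {i | c i = μ} := by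
      ext; simp
    ext x
    rw [hrange, Module.Basis.mem_span_image, Module.End.mem_eigenspace_iff, b.ext_elem_iff]
    refine forall_congr' fun i => ?_
    rw [hrepr]
    by_cases hx : b.repr x i = 0 <;> simp [hx]
  have hli : LinearIndependent K fun i : {i // c i = μ} => b i :=
    b.linearIndependent.comp _ Subtype.val_injective
  rw [hspan, finrank_span_eq_card hli, Nat.card_eq_fintype_card]

lemma extPowMap_ιMulti {R M : Type*} [CommRing R] [AddCommGroup M] [Module R M]
    (d : ℕ) (f : M →ₗ[R] M) (v : Fin d → M) :
    extPowMap d f (exteriorPower.ιMulti R d v) = exteriorPower.ιMulti R d (f ∘ v) :=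
  Subtype.ext (ExteriorAlgebra.map_apply_ιMulti f v)

lemma negFirst_basisFun (F : Type*) [Field F] (n k : ℕ) (i : Fin n) :
    negFirst F n k (Pi.basisFun F (Fin n) i)
      = (if (i : ℕ) < k then (-1 : F) else 1) • Pi.basisFun F (Fin n) i := by
  ext j
  by_cases hij : j = i
  · subst hij
    by_cases hk : (j : ℕ) < k <;> simp [negFirst, hk]
  · by_cases hk : (j : ℕ) < k <;> simp [negFirst, hk, hij]

/-- The map induced by `negFirst` on the exterior power is diagonal in the standard basis: each
factor `eᵢ` with `i < k` contributes a sign. -/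
lemma extPowMap_negFirst_basis (F : Type*) [Field F] (n k d : ℕ)
    (s : Set.powersetCard (Fin n) d) :
    extPowMap d (negFirst F n k) ((Pi.basisFun F (Fin n)).exteriorPower d s)
      = (-1 : F) ^ (s.val.filter fun i : Fin n => (i : ℕ) < k).card •
        (Pi.basisFun F (Fin n)).exteriorPower d s := by
  have hprod : ∏ j, (if ((Set.powersetCard.ofFinEmbEquiv.symm s j : Fin n) : ℕ) < k
      then (-1 : F) else 1) = (-1 : F) ^ (s.val.filter fun i : Fin n => (i : ℕ) < k).card := by
    rw [Finset.card_filter, ← Finset.prod_pow_eq_pow_sum]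
    have himage : s.val = Finset.univ.map (Set.powersetCard.ofFinEmbEquiv.symm s).toEmbedding := by
      ext i
      rw [Set.powersetCard.mem_coe_iff, ← Set.powersetCard.mem_range_ofFinEmbEquiv_symm_iff_mem]
      simp
    conv_rhs => rw [himage]
    rw [Finset.prod_map]
    refine Finset.prod_congr rfl fun j _ => ?_
    by_cases hj : ((Set.powersetCard.ofFinEmbEquiv.symm s j : Fin n) : ℕ) < k <;> simp [hj]
  rw [exteriorPower.basis_apply, exteriorPower.ιMulti_family, extPowMap_ιMulti, ← hprod,
    ← AlternatingMap.map_smul_univ]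
  congr 1
  funext j
  exact negFirst_basisFun F n k _

/-- The fixed space of `⋀^d σ_k` on `⋀^d ℝ^n` has as dimension the number of `d`-subsets of
`{0, …, n - 1}` containing an even number of elements below `k`. -/
lemma finrank_eigenspace_extPowMap_negFirst (n k d : ℕ) :
    Module.finrank ℝ ↥(Module.End.eigenspace (extPowMap d (negFirst ℝ n k)) 1)
      = (((Finset.univ : Finset (Fin n)).powersetCard d).filter fun s =>
          Even (s.filter fun i : Fin n => (i : ℕ) < k).card).card := by
  rw [finrank_eigenspace_of_diagonal _ _ _ (extPowMap_negFirst_basis ℝ n k d) 1,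
    ← Fintype.card_coe, ← Nat.card_eq_fintype_card]
  refine Nat.card_congr
    { toFun := fun s => ⟨s.1.1, ?_⟩
      invFun := fun s => ⟨⟨s.1, ?_⟩, ?_⟩
      left_inv := fun _ => rfl
      right_inv := fun _ => rfl }
  · have hs := s.2
    rw [neg_one_pow_eq_one_iff_even (by norm_num)] at hs
    rw [Finset.mem_filter, Finset.mem_powersetCard_univ]
    exact ⟨s.1.2, hs⟩
  · exact (Finset.mem_powersetCard_univ.1 (Finset.mem_filter.1 s.2).1)
  · exact (Finset.mem_filter.1 s.2).2.neg_one_pow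

/-- On the `84`-dimensional space `⋀³ℝ⁹`, the eigenspaces for the eigenvalue `1` of
`⋀³σ_k`, where `σ_k` negates the first `k` coordinates of `ℝ⁹`, `k = 2, 4, 6, 8`, have
dimensions `42`, `40`, `46`, `28`; in particular each has codimension strictly greater
than `12`. -/
theorem ext3_R9_eigenspace_dims :
    Module.finrank ℝ ↥(⋀[ℝ]^3 (Fin 9 → ℝ)) = 84 ∧
    Module.finrank ℝ ↥(Module.End.eigenspace (extPowMap 3 (negFirst ℝ 9 2)) 1) = 42 ∧
    Module.finrank ℝ ↥(Module.End.eigenspace (extPowMap 3 (negFirst ℝ 9 4)) 1) = 40 ∧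
    Module.finrank ℝ ↥(Module.End.eigenspace (extPowMap 3 (negFirst ℝ 9 6)) 1) = 46 ∧
    Module.finrank ℝ ↥(Module.End.eigenspace (extPowMap 3 (negFirst ℝ 9 8)) 1) = 28 ∧
    (∀ k ∈ ({2, 4, 6, 8} : Finset ℕ),
      12 < Module.finrank ℝ ↥(⋀[ℝ]^3 (Fin 9 → ℝ)) -
        Module.finrank ℝ ↥(Module.End.eigenspace (extPowMap 3 (negFirst ℝ 9 k)) 1)) := by
  have h0 : Module.finrank ℝ ↥(⋀[ℝ]^3 (Fin 9 → ℝ)) = 84 := by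
    rw [exteriorPower.finrank_eq, Module.finrank_fin_fun]
    rfl
  have h2 : Module.finrank ℝ ↥(Module.End.eigenspace (extPowMap 3 (negFirst ℝ 9 2)) 1) = 42 := by
    rw [finrank_eigenspace_extPowMap_negFirst]
    decide +kernel
  have h4 : Module.finrank ℝ ↥(Module.End.eigenspace (extPowMap 3 (negFirst ℝ 9 4)) 1) = 40 := by
    rw [finrank_eigenspace_extPowMap_negFirst]
    decide +kernel
  have h6 : Module.finrank ℝ ↥(Module.End.eigenspace (extPowMap 3 (negFirst ℝ 9 6)) 1) = 46 := by
    rw [finrank_eigenspace_extPowMap_negFirst]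
    decide +kernel
  have h8 : Module.finrank ℝ ↥(Module.End.eigenspace (extPowMap 3 (negFirst ℝ 9 8)) 1) = 28 := by
    rw [finrank_eigenspace_extPowMap_negFirst]
    decide +kernel
  refine ⟨h0, h2, h4, h6, h8, ?_⟩
  intro k hk
  simp only [Finset.mem_insert, Finset.mem_singleton] at hk
  rcases hk with rfl | rfl | rfl | rfl
  · rw [h0, h2]; norm_num
  · rw [h0, h4]; norm_num
  · rw [h0, h6]; norm_num
  · rw [h0, h8]; norm_num
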